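/- arXiv:2103.12611 — 4 statements merged into one kernel-verified Lean document; each statement's English description precedes it below -/
import Mathlib

section
/- Let ε₁, ε₂, a be complex numbers and set ε = ε₁ + ε₂. For every Young diagram λ the following identity holds in the field ℂ(x) of rational functions: (x − a)·∏_{□∈λ} [(x − a − c(□) − ε₁)(x − a − c(□) − ε₂)] / [(x − a − c(□))(x − a − c(□) − ε)] = ∏_{□∈∂₊λ} (x − a − c(□)) / ∏_{■∈∂₋λ} (x − a − ε − c(■)). -/
open scoped BigOperators

noncomputable section

/-- The set of growth boxes of a Young diagram `μ`. -/
def growthBoxes (μ : YoungDiagram) : Set (ℕ × ℕ) :=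
  {c | c ∉ μ ∧ IsLowerSet (insert c (μ.cells : Set (ℕ × ℕ)))}

/-- The set of corner boxes of a Young diagram `μ`. -/
def cornerBoxes (μ : YoungDiagram) : Set (ℕ × ℕ) :=
  {c | c ∈ μ ∧ IsLowerSet ((μ.cells : Set (ℕ × ℕ)) \ {c})}

/-- The content of a (0-based) box `(i, j)`, i.e. `(i−1)ε₁ + (j−1)ε₂` for the
corresponding 1-based box `(i+1, j+1)`. -/
def content (ε₁ ε₂ : ℂ) (c : ℕ × ℕ) : ℂ := (c.1 : ℂ) * ε₁ + (c.2 : ℂ) * ε₂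

/-!
Growth boxes are the minimal elements of the complement of `μ`, and corner boxes the maximal
elements of `μ`. Hence, reading a box with a negative coordinate as absent, every box `c` satisfies
`[c = 0] + [c - (1, 0) ∈ μ] + [c - (0, 1) ∈ μ] + [c - (1, 1) ∈ ∂₋μ]
  = [c ∈ ∂₊μ] + [c ∈ μ] + [c - (1, 1) ∈ μ]`.
Away from the axes this is `[p] + [q] = [p ∧ q] + [p ∨ q]` for the propositions
`p : c - (1, 0) ∈ μ` and `q : c - (0, 1) ∈ μ`: the box `c` is in `μ` or a growth box iff `p ∧ q`,
and `c - (1, 1)` is in `μ` without being a corner box iff `p ∨ q`.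

Multiplying `f c` over all `c` with these multiplicities gives a product formula for an arbitrary
weight `f` on boxes, and the Y-observable is the case where `f c` is `x - a` minus the content of
`c`.
-/

section LowerSet

variable {α : Type*} [PartialOrder α] {s : Set α} {a : α}

theorem isLowerSet_insert_iff (hs : IsLowerSet s) :
    IsLowerSet (insert a s) ↔ ∀ b < a, b ∈ s := by
  refine ⟨fun h b hb => (h hb.le (Set.mem_insert a s)).resolve_left hb.ne, ?_⟩
  rintro h x y hyx (rfl | hx)
  · exact hyx.eq_or_lt.imp_right (h y)
  · exact Or.inr (hs hyx hx)

theorem isLowerSet_sdiff_singleton_iff (hs : IsLowerSet s) :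
    IsLowerSet (s \ {a}) ↔ ∀ b > a, b ∉ s := by
  refine ⟨fun h b hab hb => (h hab.le ⟨hb, hab.ne'⟩).2 rfl, fun h x y hyx hx => ?_⟩
  refine ⟨hs hyx hx.1, ?_⟩
  rintro rfl
  exact h x (hyx.lt_of_ne' hx.2) hx.1

end LowerSet

theorem mem_map_addRightEmbedding_iff {α : Type*} [AddCommMonoid α] [PartialOrder α]
    [IsOrderedCancelAddMonoid α] [CanonicallyOrderedAdd α] [Sub α] [OrderedSub α]
    {s : Finset α} {a b : α} : b ∈ s.map (addRightEmbedding a) ↔ a ≤ b ∧ b - a ∈ s := by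
  rw [Finset.mem_map]
  constructor
  · rintro ⟨c, hc, rfl⟩
    simpa
  · rintro ⟨hab, hb⟩
    exact ⟨b - a, hb, tsub_add_cancel_of_le hab⟩

section Boxes

variable {μ : YoungDiagram}

theorem mem_growthBoxes_iff_minimal {c : ℕ × ℕ} :
    c ∈ growthBoxes μ ↔ Minimal (· ∉ μ) c := by
  simp only [growthBoxes, Set.mem_ofPred_eq, isLowerSet_insert_iff μ.isLowerSet,
    minimal_iff_forall_lt, not_not, Finset.mem_coe, YoungDiagram.mem_cells]

theorem mem_cornerBoxes_iff_maximal {c : ℕ × ℕ} :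
    c ∈ cornerBoxes μ ↔ Maximal (· ∈ μ) c := by
  simp only [cornerBoxes, Set.mem_ofPred_eq, isLowerSet_sdiff_singleton_iff μ.isLowerSet,
    maximal_iff_forall_gt, gt_iff_lt, Finset.mem_coe, YoungDiagram.mem_cells]

theorem mk_mem_growthBoxes_iff {i j : ℕ} :
    (i, j) ∈ growthBoxes μ ↔
      (i, j) ∉ μ ∧ (i = 0 ∨ (i - 1, j) ∈ μ) ∧ (j = 0 ∨ (i, j - 1) ∈ μ) := by
  rw [mem_growthBoxes_iff_minimal, minimal_iff_forall_lt]
  refine and_congr_right fun _ => ⟨fun h => ?_, ?_⟩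
  · simp only [not_not] at h
    exact ⟨i.eq_zero_or_pos.imp_right fun hi => h (Prod.mk_lt_mk.2 (by omega)),
      j.eq_zero_or_pos.imp_right fun hj => h (Prod.mk_lt_mk.2 (by omega))⟩
  · rintro ⟨hi, hj⟩ ⟨k, l⟩ hlt
    rw [not_not]
    rcases Prod.mk_lt_mk.1 hlt with ⟨hk, hl⟩ | ⟨hk, hl⟩
    · exact μ.up_left_mem (by omega) hl (hi.resolve_left (by omega))
    · exact μ.up_left_mem hk (by omega) (hj.resolve_left (by omega))

theorem mk_mem_cornerBoxes_iff {i j : ℕ} :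
    (i, j) ∈ cornerBoxes μ ↔ (i, j) ∈ μ ∧ (i + 1, j) ∉ μ ∧ (i, j + 1) ∉ μ := by
  rw [mem_cornerBoxes_iff_maximal, maximal_iff_forall_gt]
  refine and_congr_right fun _ => ⟨fun h => ?_, ?_⟩
  · exact ⟨h (Prod.mk_lt_mk.2 (by omega)), h (Prod.mk_lt_mk.2 (by omega))⟩
  · rintro ⟨hi, hj⟩ ⟨k, l⟩ hlt hkl
    rcases Prod.mk_lt_mk.1 hlt with ⟨hk, hl⟩ | ⟨hk, hl⟩
    · exact hi (μ.up_left_mem hk hl hkl)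
    · exact hj (μ.up_left_mem hk hl hkl)

variable (μ)

theorem finite_growthBoxes : (growthBoxes μ).Finite := by
  have antichain : IsAntichain (· ≤ ·) {c | Minimal (· ∉ μ) c} := setOfPred_minimal_antichain _
  exact (WellQuasiOrderedLE.finite_of_isAntichain antichain).subset
    fun _ => mem_growthBoxes_iff_minimal.1

theorem finite_cornerBoxes : (cornerBoxes μ).Finite :=
  μ.cells.finite_toSet.subset fun _ hc => hc.1

theorem shifts_cells_add_shift_cornerBoxes :
    ({0} : Finset (ℕ × ℕ)).val + (μ.cells.map (addRightEmbedding (1, 0))).val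
        + (μ.cells.map (addRightEmbedding (0, 1))).val
        + ((finite_cornerBoxes μ).toFinset.map (addRightEmbedding (1, 1))).val =
      (finite_growthBoxes μ).toFinset.val + μ.cells.val
        + (μ.cells.map (addRightEmbedding (1, 1))).val := by
  ext ⟨i, j⟩
  have left_mem : (i, j) ∈ μ → (i, j - 1) ∈ μ := μ.up_left_mem le_rfl j.pred_le
  have up_mem : (i, j) ∈ μ → (i - 1, j) ∈ μ := μ.up_left_mem i.pred_le le_rfl
  have up_left_mem_of_left : (i, j - 1) ∈ μ → (i - 1, j - 1) ∈ μ := μ.up_left_mem i.pred_le le_rfl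
  have up_left_mem_of_up : (i - 1, j) ∈ μ → (i - 1, j - 1) ∈ μ := μ.up_left_mem le_rfl j.pred_le
  simp only [Multiset.count_add, Multiset.count_eq_of_nodup (Finset.nodup _), Finset.mem_val,
    Finset.mem_singleton, Prod.mk_eq_zero, mem_map_addRightEmbedding_iff,
    Set.Finite.mem_toFinset, YoungDiagram.mem_cells, Prod.mk_le_mk, Prod.mk_sub_mk,
    mk_mem_growthBoxes_iff, mk_mem_cornerBoxes_iff]
  rcases i with _ | i <;> rcases j with _ | j <;> grind

theorem prod_cells_mul_finprod_cornerBoxes {M : Type*} [CommMonoid M] (f : ℕ × ℕ → M) :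
    f 0 * (∏ c ∈ μ.cells, f (c + (1, 0))) * (∏ c ∈ μ.cells, f (c + (0, 1))) *
        ∏ᶠ c ∈ cornerBoxes μ, f (c + (1, 1)) =
      (∏ᶠ c ∈ growthBoxes μ, f c) * (∏ c ∈ μ.cells, f c) * ∏ c ∈ μ.cells, f (c + (1, 1)) := by
  rw [finprod_mem_eq_finite_toFinset_prod _ (finite_growthBoxes μ),
    finprod_mem_eq_finite_toFinset_prod _ (finite_cornerBoxes μ)]
  simpa only [Multiset.map_add, Multiset.prod_add, Finset.prod_map_val, Finset.prod_map,
    Finset.prod_singleton, addRightEmbedding_apply] using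
    congrArg (fun s => (s.map f).prod) (shifts_cells_add_shift_cornerBoxes μ)

theorem mul_prod_cells_eq_finprod_growthBoxes_div {G : Type*} [CommGroupWithZero G]
    (f : ℕ × ℕ → G) (hf : ∀ c, f c ≠ 0) :
    f 0 * ∏ c ∈ μ.cells, (f (c + (1, 0)) * f (c + (0, 1)) / (f c * f (c + (1, 1)))) =
      (∏ᶠ c ∈ growthBoxes μ, f c) / ∏ᶠ c ∈ cornerBoxes μ, f (c + (1, 1)) := by
  have cells_ne_zero : ∏ c ∈ μ.cells, f c ≠ 0 := Finset.prod_ne_zero_iff.2 fun c _ => hf c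
  have diag_ne_zero : ∏ c ∈ μ.cells, f (c + (1, 1)) ≠ 0 :=
    Finset.prod_ne_zero_iff.2 fun _ _ => hf _
  have corner_ne_zero : ∏ᶠ c ∈ cornerBoxes μ, f (c + (1, 1)) ≠ 0 :=
    finprod_mem_induction (· ≠ 0) one_ne_zero (fun _ _ => mul_ne_zero) fun _ _ => hf _
  rw [Finset.prod_div_distrib, Finset.prod_mul_distrib, Finset.prod_mul_distrib, ← mul_div_assoc,
    div_eq_div_iff (mul_ne_zero cells_ne_zero diag_ne_zero) corner_ne_zero]
  simpa only [mul_assoc] using prod_cells_mul_finprod_cornerBoxes μ f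

end Boxes

section RatFunc

variable {R : Type*} [CommRing R] [IsDomain R]

theorem ratFunc_X_sub_C_ne_zero (r : R) : (RatFunc.X - RatFunc.C r : RatFunc R) ≠ 0 := by
  rw [← RatFunc.algebraMap_X, ← RatFunc.algebraMap_C, ← map_sub]
  exact RatFunc.algebraMap_ne_zero (Polynomial.X_sub_C_ne_zero r)

theorem Yobservable_eq_growth_corner_general (ε₁ ε₂ a : R) (μ : YoungDiagram) :
    (RatFunc.X - RatFunc.C a) *
      ∏ c ∈ μ.cells,
        ((RatFunc.X - RatFunc.C (a + (c.1 * ε₁ + c.2 * ε₂) + ε₁)) *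
            (RatFunc.X - RatFunc.C (a + (c.1 * ε₁ + c.2 * ε₂) + ε₂)) /
          ((RatFunc.X - RatFunc.C (a + (c.1 * ε₁ + c.2 * ε₂))) *
            (RatFunc.X - RatFunc.C (a + (c.1 * ε₁ + c.2 * ε₂) + (ε₁ + ε₂))))) =
      (∏ᶠ c ∈ growthBoxes μ, (RatFunc.X - RatFunc.C (a + (c.1 * ε₁ + c.2 * ε₂)))) /
        (∏ᶠ c ∈ cornerBoxes μ,
          (RatFunc.X - RatFunc.C (a + (ε₁ + ε₂) + (c.1 * ε₁ + c.2 * ε₂)))) := by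
  let w (c : ℕ × ℕ) : R := a + (c.1 * ε₁ + c.2 * ε₂)
  have w_zero : w 0 = a := by simp [w]
  have w_add_one_zero (c) : w (c + (1, 0)) = w c + ε₁ := by
    push_cast [w, Prod.fst_add, Prod.snd_add]; ring
  have w_add_zero_one (c) : w (c + (0, 1)) = w c + ε₂ := by
    push_cast [w, Prod.fst_add, Prod.snd_add]; ring
  have w_add_one_one (c) : w (c + (1, 1)) = w c + (ε₁ + ε₂) := by
    push_cast [w, Prod.fst_add, Prod.snd_add]; ring
  have key := mul_prod_cells_eq_finprod_growthBoxes_div μ (fun c => RatFunc.X - RatFunc.C (w c))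
    fun c => ratFunc_X_sub_C_ne_zero (w c)
  simp only [w_zero, w_add_one_zero, w_add_zero_one, w_add_one_one] at key
  simpa only [w, add_right_comm a (ε₁ + ε₂)] using key

end RatFunc

/-- The two expressions for the Y-observable `Y(x)|_λ` agree in `ℂ(x)`:
`(x − a)·∏_{□∈λ} (x−a−c(□)−ε₁)(x−a−c(□)−ε₂)/[(x−a−c(□))(x−a−c(□)−ε)]
  = ∏_{□∈∂₊λ}(x−a−c(□)) / ∏_{■∈∂₋λ}(x−a−ε−c(■))` with `ε = ε₁+ε₂`. -/
theorem Yobservable_eq_growth_corner (ε₁ ε₂ a : ℂ) (μ : YoungDiagram) :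
    (RatFunc.X - RatFunc.C a) *
      ∏ c ∈ μ.cells,
        ((RatFunc.X - RatFunc.C (a + content ε₁ ε₂ c + ε₁)) *
            (RatFunc.X - RatFunc.C (a + content ε₁ ε₂ c + ε₂)) /
          ((RatFunc.X - RatFunc.C (a + content ε₁ ε₂ c)) *
            (RatFunc.X - RatFunc.C (a + content ε₁ ε₂ c + (ε₁ + ε₂))))) =
      (∏ᶠ c ∈ growthBoxes μ, (RatFunc.X - RatFunc.C (a + content ε₁ ε₂ c))) /
        (∏ᶠ c ∈ cornerBoxes μ, (RatFunc.X - RatFunc.C (a + (ε₁ + ε₂) + content ε₁ ε₂ c))) :=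
  Yobservable_eq_growth_corner_general ε₁ ε₂ a μ
end
end

section
/- Fix N ≥ 1, complex numbers ε₁, ε₂, a₁,…,a_N, set ε = ε₁+ε₂, and let λ̄ = (λ^{(1)},…,λ^{(N)}) be an N-tuple of Young diagrams. In the group algebra ℤ[ℂ] of the additive group (ℂ,+), with basis elements e^w for w ∈ ℂ, let T(λ̄) = Σ_{b,c=1}^N e^{a_b − a_c}·( χ*_{λ^{(c)}} + e^ε·χ_{λ^{(b)}} − (1 − e^{ε₁})(1 − e^{ε₂})·χ_{λ^{(b)}}·χ*_{λ^{(c)}} ). Then e^ε·ι(T(λ̄)) = T(λ̄), where ι is the algebra involution of ℤ[ℂ] induced by the group automorphism w ↦ −w. Equivalently, the multiset of tangent weights {w_t} determined by Σ_t e^{w_t} = T(λ̄) coincides with the multiset {ε − w_t}. -/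
open scoped BigOperators

noncomputable section

/-- The group algebra `ℤ[ℂ]` of the additive group `(ℂ, +)`. -/
abbrev GroupAlgCX : Type := AddMonoidAlgebra ℤ ℂ

/-- The basis element `e^w` of `ℤ[ℂ]`. -/
def eExp (w : ℂ) : GroupAlgCX := AddMonoidAlgebra.single w 1

/-- `χ_λ = Σ_{□∈λ} e^{c(□)}`. -/
def chi (ε₁ ε₂ : ℂ) (μ : YoungDiagram) : GroupAlgCX :=
  ∑ c ∈ μ.cells, eExp (content ε₁ ε₂ c)

/-- `χ*_λ = Σ_{□∈λ} e^{−c(□)}`. -/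
def chiStar (ε₁ ε₂ : ℂ) (μ : YoungDiagram) : GroupAlgCX :=
  ∑ c ∈ μ.cells, eExp (-(content ε₁ ε₂ c))

/-- The tangent character
`T(λ̄) = Σ_{b,c} e^{a_b − a_c}·(χ*_{λ^{(c)}} + e^ε·χ_{λ^{(b)}}
  − (1 − e^{ε₁})(1 − e^{ε₂})·χ_{λ^{(b)}}·χ*_{λ^{(c)}})`. -/
def tangentChar (N : ℕ) (ε₁ ε₂ : ℂ) (a : Fin N → ℂ)
    (lam : Fin N → YoungDiagram) : GroupAlgCX :=
  ∑ b : Fin N, ∑ c : Fin N,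
    eExp (a b - a c) *
      (chiStar ε₁ ε₂ (lam c) + eExp (ε₁ + ε₂) * chi ε₁ ε₂ (lam b) -
        (1 - eExp ε₁) * (1 - eExp ε₂) * chi ε₁ ε₂ (lam b) * chiStar ε₁ ε₂ (lam c))

/-- The algebra involution `ι` of `ℤ[ℂ]` induced by the group automorphism `w ↦ −w`. -/
def iotaInv : GroupAlgCX ≃ₐ[ℤ] GroupAlgCX :=
  AddMonoidAlgebra.domCongr ℤ ℤ (AddEquiv.neg ℂ)

/-!
Put `W = Σ_b e^{a_b}`, `V = Σ_b e^{a_b} χ_{λ^{(b)}}`, `q₁ = e^{ε₁}` and `q₂ = e^{ε₂}`. Since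
`χ*_λ = ι(χ_λ)`, the double sum factors as
`T = W ι(V) + q₁ q₂ V ι(W) - (1 - q₁) (1 - q₂) V ι(V)`.
The operation `q₁ q₂ ι(·)` exchanges the first two terms. It fixes the third because `V ι(V)` is
`ι`-invariant and `qᵢ (1 - qᵢ⁻¹) = -(1 - qᵢ)`, where the two signs cancel.
-/

section ADHM

variable {R : Type*} [CommRing R]

/-- The character of the tangent space in the ADHM description with framing space of character `W`
and gauge space of character `V`, where the two coordinates of the plane carry the weights `q₁` and
`q₂`. The map `σ` stands for dualization of characters. -/
def adhmChar (σ : R → R) (q₁ q₂ W V : R) : R :=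
  W * σ V + q₁ * q₂ * (V * σ W) - (1 - q₁) * (1 - q₂) * (V * σ V)

lemma mul_one_sub_mul_one_sub_of_mul_eq_one {x x' y y' : R} (hx : x * x' = 1)
    (hy : y * y' = 1) : x * y * ((1 - x') * (1 - y')) = (1 - x) * (1 - y) :=
  calc x * y * ((1 - x') * (1 - y'))
      = (x - x * x') * (y - y * y') := by ring
    _ = (1 - x) * (1 - y) := by rw [hx, hy]; ring

theorem tangentChar_duality_general {F : Type*} [FunLike F R R] [RingHomClass F R R] {σ : F}
    (hσ : Function.Involutive σ) {q₁ q₂ : R} (hq₁ : q₁ * σ q₁ = 1) (hq₂ : q₂ * σ q₂ = 1)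
    (W V : R) : q₁ * q₂ * σ (adhmChar σ q₁ q₂ W V) = adhmChar σ q₁ q₂ W V := by
  have map_adhmChar : σ (adhmChar σ q₁ q₂ W V) =
      V * σ W + σ q₁ * σ q₂ * (W * σ V) - (1 - σ q₁) * (1 - σ q₂) * (V * σ V) := by
    simp only [adhmChar, map_sub, map_add, map_mul, map_one, hσ W, hσ V]
    ring
  have hq : q₁ * q₂ * (σ q₁ * σ q₂) = 1 := by rw [mul_mul_mul_comm, hq₁, hq₂, one_mul]
  have hfactor := mul_one_sub_mul_one_sub_of_mul_eq_one hq₁ hq₂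
  rw [map_adhmChar, adhmChar]
  linear_combination W * σ V * hq - V * σ V * hfactor

end ADHM

lemma eExp_add (x y : ℂ) : eExp (x + y) = eExp x * eExp y := by
  simp [eExp, AddMonoidAlgebra.single_mul_single]

lemma iotaInv_eExp (w : ℂ) : iotaInv (eExp w) = eExp (-w) := by
  simp [iotaInv, eExp]

lemma eExp_mul_iotaInv_eExp (w : ℂ) : eExp w * iotaInv (eExp w) = 1 := by
  rw [iotaInv_eExp, ← eExp_add, add_neg_cancel, eExp, AddMonoidAlgebra.one_def]

lemma iotaInv_involutive : Function.Involutive iotaInv := by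
  intro f
  ext w
  simp [iotaInv]

lemma iotaInv_chi (ε₁ ε₂ : ℂ) (μ : YoungDiagram) :
    iotaInv (chi ε₁ ε₂ μ) = chiStar ε₁ ε₂ μ := by
  simp only [chi, chiStar, map_sum, iotaInv_eExp]

section FixedPoint

variable {ι : Type*} [Fintype ι]

/-- The character `W = Σ_b e^{a_b}` of the framing space. -/
def framingChar (a : ι → ℂ) : GroupAlgCX := ∑ b, eExp (a b)

/-- The character `V = Σ_b e^{a_b} χ_{λ^{(b)}}` of the tautological bundle at the fixed point
`λ̄`. -/
def tautologicalChar (ε₁ ε₂ : ℂ) (a : ι → ℂ) (lam : ι → YoungDiagram) : GroupAlgCX :=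
  ∑ b, eExp (a b) * chi ε₁ ε₂ (lam b)

lemma iotaInv_framingChar (a : ι → ℂ) :
    iotaInv (framingChar a) = ∑ c, eExp (-a c) := by
  simp only [framingChar, map_sum, iotaInv_eExp]

lemma iotaInv_tautologicalChar (ε₁ ε₂ : ℂ) (a : ι → ℂ) (lam : ι → YoungDiagram) :
    iotaInv (tautologicalChar ε₁ ε₂ a lam) = ∑ c, eExp (-a c) * chiStar ε₁ ε₂ (lam c) := by
  simp only [tautologicalChar, map_sum, map_mul, iotaInv_eExp, iotaInv_chi]

end FixedPoint

lemma tangentChar_eq_adhmChar (N : ℕ) (ε₁ ε₂ : ℂ) (a : Fin N → ℂ) (lam : Fin N → YoungDiagram) :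
    tangentChar N ε₁ ε₂ a lam =
      adhmChar iotaInv (eExp ε₁) (eExp ε₂) (framingChar a) (tautologicalChar ε₁ ε₂ a lam) := by
  rw [adhmChar, iotaInv_framingChar, iotaInv_tautologicalChar, framingChar, tautologicalChar]
  simp only [Finset.sum_mul_sum]
  simp only [tangentChar, Finset.mul_sum, ← Finset.sum_add_distrib, ← Finset.sum_sub_distrib]
  refine Finset.sum_congr rfl fun b _ => Finset.sum_congr rfl fun c _ => ?_
  rw [sub_eq_add_neg (a b), eExp_add, eExp_add]
  ring

/-- The duality of tangent weights: `e^ε · ι(T(λ̄)) = T(λ̄)`, i.e. the multiset of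
tangent weights `{w_t}` coincides with the multiset `{ε − w_t}`. -/
theorem tangentChar_duality (N : ℕ) (hN : 1 ≤ N) (ε₁ ε₂ : ℂ) (a : Fin N → ℂ)
    (lam : Fin N → YoungDiagram) :
    eExp (ε₁ + ε₂) * iotaInv (tangentChar N ε₁ ε₂ a lam) = tangentChar N ε₁ ε₂ a lam := by
  rw [tangentChar_eq_adhmChar, eExp_add]
  exact tangentChar_duality_general iotaInv_involutive (eExp_mul_iotaInv_eExp ε₁)
    (eExp_mul_iotaInv_eExp ε₂) (framingChar a) (tautologicalChar ε₁ ε₂ a lam)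
end
end

section
/- In the regular ℤ/N-colored setup with generic parameters, fix an N-tuple λ̄ of Young diagrams and ω ∈ ℤ/N, and write k_ω = k_ω(λ̄). Set A_ω = ã_ω/ε₁, κ̃ = ε̃₂/ε₁, d_ω = k_{ω−1} − k_ω − A_ω, and c_ω = (ε₁/2)·k_ω + Σ (ã_{ω′} + c̃(i,j)), the sum running over all boxes (i,j) ∈ λ^{(ω′)} of color ω. Then the colored Y-observable Y_ω(x)|_{λ̄} ∈ ℂ(x) has large-x expansion with leading term x, next coefficient ε₁·d_ω, and x^{−1}-coefficient ε₁²·[ (d_ω² − A_ω²)/2 + κ̃·k_{ω−1} + (c_{ω−1} − c_ω)/ε₁ ]; precisely, lim_{x→∞}(Y_ω(x)|_{λ̄} − x) = ε₁·d_ω and lim_{x→∞} x·(Y_ω(x)|_{λ̄} − x − ε₁·d_ω) = ε₁²·( (d_ω² − A_ω²)/2 + κ̃·k_{ω−1} + (c_{ω−1} − c_ω)/ε₁ ). -/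
open scoped BigOperators

noncomputable section

/-- The content `c̃(i, j) = (i−1)ε₁ + (j−1)ε̃₂` of a box, in 0-based coordinates. -/
def ctil (ε₁ ε₂t : ℂ) (c : ℕ × ℕ) : ℂ := (c.1 : ℂ) * ε₁ + (c.2 : ℂ) * ε₂t

/-- The instanton charge `k_ω(λ̄)`: the number of boxes of `λ̄` of color `ω`,
where a (0-based) box `(i, j)` of `λ^{(ω′)}` has color `ω′ + j`. -/
def kcharge (N : ℕ) [NeZero N] (lam : ZMod N → YoungDiagram) (ω : ZMod N) : ℕ :=
  ∑ ω' : ZMod N, ((lam ω').cells.filter fun c => ω' + (c.2 : ZMod N) = ω).card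

/-- The colored Y-observable `Y_ω(x + s)|_λ̄ ∈ ℂ(x)` (the variable is shifted by `s`). -/
def Ycol (N : ℕ) [NeZero N] (ε₁ ε₂t : ℂ) (aT : ZMod N → ℂ) (ω : ZMod N) (s : ℂ)
    (lam : ZMod N → YoungDiagram) : RatFunc ℂ :=
  (RatFunc.X + RatFunc.C s - RatFunc.C (aT ω)) *
    ∏ ω' : ZMod N, ∏ c ∈ (lam ω').cells,
      ((if ω' + (c.2 : ZMod N) = ω then
          (RatFunc.X + RatFunc.C s - RatFunc.C (aT ω' + ctil ε₁ ε₂t c + ε₁)) /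
            (RatFunc.X + RatFunc.C s - RatFunc.C (aT ω' + ctil ε₁ ε₂t c))
        else 1) *
       (if ω' + (c.2 : ZMod N) = ω - 1 then
          (RatFunc.X + RatFunc.C s - RatFunc.C (aT ω' + ctil ε₁ ε₂t c + ε₂t)) /
            (RatFunc.X + RatFunc.C s - RatFunc.C (aT ω' + ctil ε₁ ε₂t c + ε₁ + ε₂t))
        else 1))

/-- The observable `c_ω = (ε₁/2)·k_ω + Σ_{boxes of color ω} (ã_{ω′} + c̃(i,j))`. -/
def cobs (N : ℕ) [NeZero N] (ε₁ ε₂t : ℂ) (aT : ZMod N → ℂ)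
    (lam : ZMod N → YoungDiagram) (ω : ZMod N) : ℂ :=
  ε₁ / 2 * (kcharge N lam ω : ℂ) +
    ∑ ω' : ZMod N,
      ∑ c ∈ (lam ω').cells.filter fun c => ω' + (c.2 : ZMod N) = ω,
        (aT ω' + ctil ε₁ ε₂t c)

/-- The observable `d_ω = k_{ω−1} − k_ω − A_ω` with `A_ω = ã_ω/ε₁`. -/
def dobs (N : ℕ) [NeZero N] (ε₁ : ℂ) (aT : ZMod N → ℂ)
    (lam : ZMod N → YoungDiagram) (ω : ZMod N) : ℂ :=
  (kcharge N lam (ω - 1) : ℂ) - (kcharge N lam ω : ℂ) - aT ω / ε₁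

/-!
Taking logarithms turns the product into a sum: up to `o(x⁻²)`,
`log ((x - b) / (x - a)) = (a - b) / x + (a² - b²) / (2 x²)`.
After division by `x`, each box of color `ω`, of shifted content `w`, is a factor with
`(a, b) = (w, w + ε₁)`, and each box of color `ω - 1` is one with
`(a, b) = (w + ε₁ + ε̃₂, w + ε̃₂)`. In both cases `b - a = ± ε₁` is the same for all boxes, so the
coefficients of the logarithm depend on the boxes only through their number and the sum of their
shifted contents.
-/

open Filter Topology Bornology

section Eval

open RatFunc

variable {K ι : Type*} [Field K]

lemma eventually_cofinite_eval₂_ne_zero {P : Polynomial K} (hP : P ≠ 0) :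
    ∀ᶠ x in cofinite, P.eval₂ (RingHom.id K) x ≠ 0 :=
  eventually_cofinite.2 <| (Polynomial.finite_setOfPred_isRoot hP).subset fun _ hx => not_not.1 hx

lemma eval_ratFunc_mul_eventuallyEq (f g : RatFunc K) :
    (fun x => eval (RingHom.id K) x (f * g)) =ᶠ[cofinite]
      fun x => eval (RingHom.id K) x f * eval (RingHom.id K) x g := by
  filter_upwards [eventually_cofinite_eval₂_ne_zero f.denom_ne_zero,
    eventually_cofinite_eval₂_ne_zero g.denom_ne_zero] with x hf hg
  exact eval_mul _ _ hf hg

lemma eval_ratFunc_div_eventuallyEq (f g : RatFunc K) :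
    (fun x => eval (RingHom.id K) x (f / g)) =ᶠ[cofinite]
      fun x => eval (RingHom.id K) x f / eval (RingHom.id K) x g := by
  rcases eq_or_ne g 0 with rfl | hg
  · simp
  filter_upwards [eval_ratFunc_mul_eventuallyEq (f / g) g,
    eventually_cofinite_eval₂_ne_zero (num_ne_zero hg),
    eventually_cofinite_eval₂_ne_zero g.denom_ne_zero] with x hmul hnum hdenom
  rw [div_mul_cancel₀ f hg] at hmul
  exact eq_div_of_mul_eq (div_ne_zero hnum hdenom) hmul.symm

lemma eval_ratFunc_prod_eventuallyEq (s : Finset ι) (F : ι → RatFunc K) :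
    (fun x => eval (RingHom.id K) x (∏ i ∈ s, F i)) =ᶠ[cofinite]
      fun x => ∏ i ∈ s, eval (RingHom.id K) x (F i) := by
  classical
  induction s using Finset.induction_on with
  | empty => simp
  | insert i s hi ih =>
    filter_upwards [eval_ratFunc_mul_eventuallyEq (F i) (∏ j ∈ s, F j), ih] with x hmul hprod
    rw [Finset.prod_insert hi, Finset.prod_insert hi, hmul, hprod]

lemma eval_X_add_C_sub_C (x z a : K) :
    eval (RingHom.id K) x (X + C z - C a) = x - (a - z) := by
  have h : (X + C z - C a : RatFunc K) =
      algebraMap (Polynomial K) (RatFunc K) (.X + .C z - .C a) := by simp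
  rw [h, eval_algebraMap]
  simp [sub_sub_eq_add_sub]

lemma eval_prod_linear_div_linear_eventuallyEq (s : Finset ι) (a b : ι → K) (z : K) :
    (fun x => eval (RingHom.id K) x (∏ i ∈ s, (X + C z - C (b i)) / (X + C z - C (a i))))
      =ᶠ[cofinite] fun x => ∏ i ∈ s, (x - (b i - z)) / (x - (a i - z)) := by
  have hfactors : ∀ᶠ x in cofinite, ∀ i ∈ s,
      eval (RingHom.id K) x ((X + C z - C (b i)) / (X + C z - C (a i))) =
        (x - (b i - z)) / (x - (a i - z)) := by
    refine (eventually_all_finset s).2 fun i _ => ?_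
    filter_upwards [eval_ratFunc_div_eventuallyEq (X + C z - C (b i)) (X + C z - C (a i))] with x hx
    rw [hx, eval_X_add_C_sub_C, eval_X_add_C_sub_C]
  filter_upwards [eval_ratFunc_prod_eventuallyEq s _, hfactors] with x hprod hx
  rw [hprod, Finset.prod_congr rfl hx]

end Eval

section LogExpansion

variable {𝕜 ι : Type*} [NormedField 𝕜] {f g : 𝕜 → 𝕜} {p q p' q' : 𝕜}

/-- `f` has an expansion at infinity equivalent to `log f(x) = p / x + q / x² + o(x⁻²)`. It is
encoded without the logarithm, as `f(x) = 1 + p / x + (p² / 2 + q) / x² + o(x⁻²)`; the pair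
`(p, q)` is then additive under multiplication of functions. -/
def HasLogExpansion (f : 𝕜 → 𝕜) (p q : 𝕜) : Prop :=
  Tendsto (fun x => x * (x * (f x - 1) - p)) (cobounded 𝕜) (𝓝 (p ^ 2 / 2 + q))

namespace HasLogExpansion

lemma congr' (hf : HasLogExpansion f p q) (hfg : f =ᶠ[cobounded 𝕜] g) : HasLogExpansion g p q :=
  Tendsto.congr' (hfg.mono fun x hx => by rw [hx]) hf

lemma tendsto_mul_sub_one (hf : HasLogExpansion f p q) :
    Tendsto (fun x => x * (f x - 1)) (cobounded 𝕜) (𝓝 p) := by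
  have h : Tendsto (fun x => x⁻¹ * (x * (x * (f x - 1) - p)) + p) (cobounded 𝕜) (𝓝 p) := by
    simpa using (tendsto_inv₀_cobounded.mul hf).add_const p
  refine h.congr' ?_
  filter_upwards [eventually_ne_cobounded 0] with x hx
  rw [inv_mul_cancel_left₀ hx, sub_add_cancel]

lemma one : HasLogExpansion (fun _ : 𝕜 => 1) 0 0 := by
  simpa [HasLogExpansion] using tendsto_const_nhds

lemma mul [CharZero 𝕜] (hf : HasLogExpansion f p q) (hg : HasLogExpansion g p' q') :
    HasLogExpansion (fun x => f x * g x) (p + p') (q + q') := by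
  have h := (Tendsto.add hf hg).add (hf.tendsto_mul_sub_one.mul hg.tendsto_mul_sub_one)
  have hlim : (p + p') ^ 2 / 2 + (q + q') = p ^ 2 / 2 + q + (p' ^ 2 / 2 + q') + p * p' := by ring
  rw [HasLogExpansion, hlim]
  exact h.congr fun x => by ring

lemma prod [CharZero 𝕜] {s : Finset ι} {F : ι → 𝕜 → 𝕜} {P Q : ι → 𝕜}
    (h : ∀ i ∈ s, HasLogExpansion (F i) (P i) (Q i)) :
    HasLogExpansion (fun x => ∏ i ∈ s, F i x) (∑ i ∈ s, P i) (∑ i ∈ s, Q i) := by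
  classical
  induction s using Finset.induction_on with
  | empty => simpa using one
  | insert i s hi ih =>
    simp only [Finset.prod_insert hi, Finset.sum_insert hi]
    exact (h i (s.mem_insert_self i)).mul (ih fun j hj => h j (Finset.mem_insert_of_mem hj))

lemma linear_div_linear [CharZero 𝕜] (a b : 𝕜) :
    HasLogExpansion (fun x => (x - b) / (x - a)) (a - b) ((a ^ 2 - b ^ 2) / 2) := by
  have hinv : Tendsto (fun x : 𝕜 => (x - a)⁻¹) (cobounded 𝕜) (𝓝 0) :=
    tendsto_inv₀_cobounded.comp (tendsto_sub_const_cobounded a)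
  have hlim : (a - b) ^ 2 / 2 + (a ^ 2 - b ^ 2) / 2 = (a - b) * a * (1 + a * 0) := by ring
  rw [HasLogExpansion, hlim]
  refine (((hinv.const_mul a).const_add 1).const_mul ((a - b) * a)).congr' ?_
  filter_upwards [eventually_ne_cobounded a] with x hx
  have : x - a ≠ 0 := sub_ne_zero.2 hx
  field_simp
  ring

lemma prod_linear_div_linear_of_sub_eq [CharZero 𝕜] {s : Finset ι} {a b : ι → 𝕜} {ε : 𝕜}
    (h : ∀ i ∈ s, b i - a i = ε) :
    HasLogExpansion (fun x => ∏ i ∈ s, (x - b i) / (x - a i))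
      (-(ε * s.card)) (-(ε * (ε / 2 * s.card + ∑ i ∈ s, a i))) := by
  have hp : ∑ i ∈ s, (a i - b i) = -(ε * s.card) := by
    have hneg : ∀ i ∈ s, a i - b i = -ε := fun i hi => by rw [← h i hi, neg_sub]
    rw [Finset.sum_congr rfl hneg, Finset.sum_const, nsmul_eq_mul, mul_neg, mul_comm]
  have hq : ∑ i ∈ s, (a i ^ 2 - b i ^ 2) / 2 = -(ε * (ε / 2 * s.card + ∑ i ∈ s, a i)) := by
    have hsq : ∀ i ∈ s, (a i ^ 2 - b i ^ 2) / 2 = -(ε * (ε / 2 + a i)) := fun i hi => by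
      rw [← h i hi]
      ring
    rw [Finset.sum_congr rfl hsq, Finset.sum_neg_distrib, ← Finset.mul_sum,
      Finset.sum_add_distrib, Finset.sum_const, nsmul_eq_mul, mul_comm (s.card : 𝕜)]
  rw [← hp, ← hq]
  exact prod fun i _ => linear_div_linear (a i) (b i)

lemma tendsto_sub_of_div (hf : HasLogExpansion (fun x => f x / x) p q) :
    Tendsto (fun x => f x - x) (cobounded 𝕜) (𝓝 p) ∧
      Tendsto (fun x => x * (f x - x - p)) (cobounded 𝕜) (𝓝 (p ^ 2 / 2 + q)) := by
  have hsub : (fun x => x * (f x / x - 1)) =ᶠ[cobounded 𝕜] fun x => f x - x := by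
    filter_upwards [eventually_ne_cobounded 0] with x hx
    rw [mul_sub, mul_div_cancel₀ _ hx, mul_one]
  exact ⟨hf.tendsto_mul_sub_one.congr' hsub,
    Tendsto.congr' (hsub.mono fun x hx => congrArg (fun y => x * (y - p)) hx) hf⟩

end HasLogExpansion

end LogExpansion

section ColoredBoxes

variable {N : ℕ} [NeZero N] (ε₁ ε₂t : ℂ) (aT : ZMod N → ℂ) (lam : ZMod N → YoungDiagram)
  (ω : ZMod N)

/-- The boxes of color `ω` of the tuple `λ̄`, a box of `λ^{(ω′)}` being encoded as the pair of `ω′`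
and its 0-based coordinates. -/
def boxesOfColor : Finset (Σ _ : ZMod N, ℕ × ℕ) :=
  Finset.univ.sigma fun ω' => (lam ω').cells.filter fun c => ω' + (c.2 : ZMod N) = ω

/-- The shifted content `ã_{ω′} + c̃(i, j)` of a box `(i, j)` of `λ^{(ω′)}`. -/
def shiftedContent (b : Σ _ : ZMod N, ℕ × ℕ) : ℂ := aT b.1 + ctil ε₁ ε₂t b.2

lemma kcharge_eq_card_boxesOfColor : kcharge N lam ω = (boxesOfColor lam ω).card :=
  (Finset.card_sigma _ _).symm

lemma cobs_eq_sum_shiftedContent :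
    cobs N ε₁ ε₂t aT lam ω =
      ε₁ / 2 * kcharge N lam ω + ∑ b ∈ boxesOfColor lam ω, shiftedContent ε₁ ε₂t aT b :=
  congrArg _ (Finset.sum_sigma _ _ (shiftedContent ε₁ ε₂t aT)).symm

lemma Ycol_eq_prod_boxesOfColor (s : ℂ) :
    Ycol N ε₁ ε₂t aT ω s lam =
      (RatFunc.X + RatFunc.C s - RatFunc.C (aT ω)) *
        ((∏ b ∈ boxesOfColor lam ω,
            (RatFunc.X + RatFunc.C s - RatFunc.C (shiftedContent ε₁ ε₂t aT b + ε₁)) /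
              (RatFunc.X + RatFunc.C s - RatFunc.C (shiftedContent ε₁ ε₂t aT b))) *
          ∏ b ∈ boxesOfColor lam (ω - 1),
            (RatFunc.X + RatFunc.C s - RatFunc.C (shiftedContent ε₁ ε₂t aT b + ε₂t)) /
              (RatFunc.X + RatFunc.C s -
                RatFunc.C (shiftedContent ε₁ ε₂t aT b + ε₁ + ε₂t))) := by
  simp only [Ycol, boxesOfColor, shiftedContent, Finset.prod_sigma, Finset.prod_filter,
    Finset.prod_mul_distrib]

lemma eval_Ycol_eventuallyEq (s : ℂ) :
    (fun x => RatFunc.eval (RingHom.id ℂ) x (Ycol N ε₁ ε₂t aT ω s lam)) =ᶠ[cofinite] fun x =>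
      (x - (aT ω - s)) *
        ((∏ b ∈ boxesOfColor lam ω,
            (x - (shiftedContent ε₁ ε₂t aT b + ε₁ - s)) / (x - (shiftedContent ε₁ ε₂t aT b - s))) *
          ∏ b ∈ boxesOfColor lam (ω - 1),
            (x - (shiftedContent ε₁ ε₂t aT b + ε₂t - s)) /
              (x - (shiftedContent ε₁ ε₂t aT b + ε₁ + ε₂t - s))) := by
  simp only [Ycol_eq_prod_boxesOfColor]
  filter_upwards [eval_ratFunc_mul_eventuallyEq _ _, eval_ratFunc_mul_eventuallyEq _ _,
    eval_prod_linear_div_linear_eventuallyEq (boxesOfColor lam ω) _ _ s,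
    eval_prod_linear_div_linear_eventuallyEq (boxesOfColor lam (ω - 1)) _ _ s]
    with x hmul hmul' hprod hprod'
  rw [hmul, hmul', hprod, hprod', eval_X_add_C_sub_C]

lemma hasLogExpansion_prod_shiftedContent_add_div (s : ℂ) :
    HasLogExpansion
      (fun x => ∏ b ∈ boxesOfColor lam ω,
        (x - (shiftedContent ε₁ ε₂t aT b + ε₁ - s)) / (x - (shiftedContent ε₁ ε₂t aT b - s)))
      (-(ε₁ * kcharge N lam ω))
      (-(ε₁ * (cobs N ε₁ ε₂t aT lam ω - s * kcharge N lam ω))) := by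
  convert HasLogExpansion.prod_linear_div_linear_of_sub_eq (ε := ε₁) fun b _ => ?_ using 1
  · rw [kcharge_eq_card_boxesOfColor]
  · rw [cobs_eq_sum_shiftedContent, kcharge_eq_card_boxesOfColor]
    simp only [Finset.sum_sub_distrib, Finset.sum_const, nsmul_eq_mul]
    ring
  · ring

lemma hasLogExpansion_prod_shiftedContent_div_add (s : ℂ) :
    HasLogExpansion
      (fun x => ∏ b ∈ boxesOfColor lam ω,
        (x - (shiftedContent ε₁ ε₂t aT b + ε₂t - s)) /
          (x - (shiftedContent ε₁ ε₂t aT b + ε₁ + ε₂t - s)))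
      (ε₁ * kcharge N lam ω)
      (ε₁ * (cobs N ε₁ ε₂t aT lam ω + (ε₂t - s) * kcharge N lam ω)) := by
  convert HasLogExpansion.prod_linear_div_linear_of_sub_eq (ε := -ε₁) fun b _ => ?_ using 1
  · rw [kcharge_eq_card_boxesOfColor]
    ring
  · rw [cobs_eq_sum_shiftedContent, kcharge_eq_card_boxesOfColor]
    simp only [Finset.sum_sub_distrib, Finset.sum_add_distrib, Finset.sum_const, nsmul_eq_mul]
    ring
  · ring

lemma hasLogExpansion_Ycol_div (s : ℂ) :
    HasLogExpansion
      (fun x => RatFunc.eval (RingHom.id ℂ) x (Ycol N ε₁ ε₂t aT ω s lam) / x)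
      (s - aT ω + ε₁ * (kcharge N lam (ω - 1) - kcharge N lam ω))
      (-(aT ω - s) ^ 2 / 2 +
        ε₁ * (cobs N ε₁ ε₂t aT lam (ω - 1) - cobs N ε₁ ε₂t aT lam ω +
          ε₂t * kcharge N lam (ω - 1) - s * (kcharge N lam (ω - 1) - kcharge N lam ω))) := by
  have hfactors := (HasLogExpansion.linear_div_linear 0 (aT ω - s)).mul
    ((hasLogExpansion_prod_shiftedContent_add_div ε₁ ε₂t aT lam ω s).mul
      (hasLogExpansion_prod_shiftedContent_div_add ε₁ ε₂t aT lam (ω - 1) s))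
  convert hfactors.congr' ?_ using 1
  · ring
  · ring
  · filter_upwards [le_cofinite ℂ (eval_Ycol_eventuallyEq ε₁ ε₂t aT lam ω s)] with x hx
    rw [hx, sub_zero, div_mul_eq_mul_div]

end ColoredBoxes

theorem Ycol_large_x_expansion_general {N : ℕ} [NeZero N] {ε₁ : ℂ} (hε₁ : ε₁ ≠ 0)
    (ε₂t : ℂ) (aT : ZMod N → ℂ) (lam : ZMod N → YoungDiagram) (ω : ZMod N) (s : ℂ) :
    Tendsto (fun x : ℂ => RatFunc.eval (RingHom.id ℂ) x (Ycol N ε₁ ε₂t aT ω s lam) - x)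
      (cocompact ℂ) (𝓝 (s + ε₁ * dobs N ε₁ aT lam ω)) ∧
    Tendsto
      (fun x : ℂ => x *
        (RatFunc.eval (RingHom.id ℂ) x (Ycol N ε₁ ε₂t aT ω s lam) - x -
          (s + ε₁ * dobs N ε₁ aT lam ω)))
      (cocompact ℂ)
      (𝓝 (ε₁ ^ 2 *
        ((dobs N ε₁ aT lam ω ^ 2 - (aT ω / ε₁) ^ 2) / 2 +
          (ε₂t / ε₁) * (kcharge N lam (ω - 1) : ℂ) +
          (cobs N ε₁ ε₂t aT lam (ω - 1) - cobs N ε₁ ε₂t aT lam ω) / ε₁))) := by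
  have hp : s + ε₁ * dobs N ε₁ aT lam ω =
      s - aT ω + ε₁ * (kcharge N lam (ω - 1) - kcharge N lam ω) := by
    rw [dobs, mul_sub, mul_div_cancel₀ _ hε₁]
    ring
  have h := (hasLogExpansion_Ycol_div ε₁ ε₂t aT lam ω s).tendsto_sub_of_div
  rw [Metric.cobounded_eq_cocompact] at h
  rw [hp]
  convert h using 3
  rw [dobs]
  field_simp
  ring

/-- Large-`x` expansion of the colored Y-observable: `Y_ω(x)|_λ̄` has leading term `x`,
next coefficient `ε₁·d_ω`, and `x^{−1}`-coefficient
`ε₁²·[(d_ω² − A_ω²)/2 + κ̃·k_{ω−1} + (c_{ω−1} − c_ω)/ε₁]`. -/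
theorem Ycol_large_x_expansion (N : ℕ) [NeZero N]
    (ε₁ ε₂t : ℂ) (aT : ZMod N → ℂ)
    (hgen : ∀ ω' ω'' : ZMod N, ∀ i j : ℤ,
      aT ω' - aT ω'' + (i : ℂ) * ε₁ + (j : ℂ) * ε₂t = 0 → ω' = ω'' ∧ i = 0 ∧ j = 0)
    (lam : ZMod N → YoungDiagram) (ω : ZMod N) :
    Filter.Tendsto
      (fun x : ℂ => RatFunc.eval (RingHom.id ℂ) x (Ycol N ε₁ ε₂t aT ω 0 lam) - x)
      (Filter.cocompact ℂ) (nhds (ε₁ * dobs N ε₁ aT lam ω)) ∧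
    Filter.Tendsto
      (fun x : ℂ => x *
        (RatFunc.eval (RingHom.id ℂ) x (Ycol N ε₁ ε₂t aT ω 0 lam) - x -
          ε₁ * dobs N ε₁ aT lam ω))
      (Filter.cocompact ℂ)
      (nhds (ε₁ ^ 2 *
        ((dobs N ε₁ aT lam ω ^ 2 - (aT ω / ε₁) ^ 2) / 2 +
          (ε₂t / ε₁) * (kcharge N lam (ω - 1) : ℂ) +
          (cobs N ε₁ ε₂t aT lam (ω - 1) - cobs N ε₁ ε₂t aT lam ω) / ε₁))) := by
  have hε₁ : ε₁ ≠ 0 := fun h => one_ne_zero (hgen 0 0 1 0 (by simp [h])).2.1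
  simpa only [zero_add] using Ycol_large_x_expansion_general hε₁ ε₂t aT lam ω 0
end
end

section
/- Let N ≥ 1 and let q: ℤ/N → R be a family of elements of a commutative ring R. Define U_ω = 1 + q_{ω+1} + q_{ω+1}q_{ω+2} + … + q_{ω+1}q_{ω+2}⋯q_{ω+N−1} (i.e., U_ω = Σ_{l=0}^{N−1} ∏_{m=1}^{l} q_{ω+m}) and q = ∏_{ω∈ℤ/N} q_ω. Then for every ω ∈ ℤ/N: (1 + q_ω)·U_ω − U_{ω−1} − q_{ω+1}·U_{ω+1} = 0, and U_ω − q_{ω+1}·U_{ω+1} = 1 − q. -/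
open scoped BigOperators

/-- `U_ω = 1 + q_{ω+1} + q_{ω+1}q_{ω+2} + … + q_{ω+1}⋯q_{ω+N−1}`, indices mod `N`. -/
def Ufam {R : Type*} [CommRing R] (N : ℕ) (q : ZMod N → R) (ω : ZMod N) : R :=
  ∑ l ∈ Finset.range N, ∏ m ∈ Finset.range l, q (ω + ((m + 1 : ℕ) : ZMod N))

/-! Factoring `q_{ω+1}` out of the partial products `∏_{m=1}^{l} q_{ω+m}` with `l ≥ 1` shows that
`1 + q_{ω+1} U_{ω+1}` is `U_ω` with one further term, a product over a full period.
This is the second identity; the first is its difference at `ω` and `ω - 1`. -/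

theorem sum_prod_range_succ_eq_one_add_mul {R : Type*} [CommSemiring R] (f : ℕ → R) (n : ℕ) :
    ∑ l ∈ Finset.range (n + 1), ∏ m ∈ Finset.range l, f m =
      1 + f 0 * ∑ l ∈ Finset.range n, ∏ m ∈ Finset.range l, f (m + 1) := by
  simp only [Finset.sum_range_succ', Finset.prod_range_succ', Finset.prod_range_zero,
    ← Finset.sum_mul]
  ring

theorem prod_range_natCast_zmod {M : Type*} [CommMonoid M] (N : ℕ) [NeZero N] (f : ZMod N → M) :
    ∏ m ∈ Finset.range N, f m = ∏ σ, f σ :=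
  Finset.prod_nbij' (fun m ↦ (m : ZMod N)) ZMod.val
    (fun _ _ ↦ Finset.mem_univ _)
    (fun σ _ ↦ Finset.mem_range.2 σ.val_lt)
    (fun _ hm ↦ ZMod.val_cast_of_lt (Finset.mem_range.1 hm))
    (fun σ _ ↦ ZMod.natCast_zmod_val σ)
    (fun _ _ ↦ rfl)

theorem prod_range_add_natCast_zmod {M : Type*} [CommMonoid M] (N : ℕ) [NeZero N]
    (f : ZMod N → M) (a : ZMod N) :
    ∏ m ∈ Finset.range N, f (a + m) = ∏ σ, f σ :=
  (prod_range_natCast_zmod N fun σ ↦ f (a + σ)).trans (Equiv.prod_comp (Equiv.addLeft a) f)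

theorem Ufam_eq_sum_prod_add_one_add {R : Type*} [CommRing R] (N : ℕ) (q : ZMod N → R)
    (ω : ZMod N) :
    Ufam N q ω = ∑ l ∈ Finset.range N, ∏ m ∈ Finset.range l, q (ω + 1 + m) := by
  simp only [Ufam, Nat.cast_add_one, add_assoc, add_comm (1 : ZMod N)]

theorem Ufam_add_prod {R : Type*} [CommRing R] (N : ℕ) [NeZero N] (q : ZMod N → R) (ω : ZMod N) :
    Ufam N q ω + ∏ σ, q σ = 1 + q (ω + 1) * Ufam N q (ω + 1) :=
  calc
    Ufam N q ω + ∏ σ, q σ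
    _ = ∑ l ∈ Finset.range (N + 1), ∏ m ∈ Finset.range l, q (ω + 1 + m) := by
      rw [Finset.sum_range_succ, Ufam_eq_sum_prod_add_one_add, prod_range_add_natCast_zmod]
    _ = 1 + q (ω + 1 + (0 : ℕ)) * Ufam N q (ω + 1) :=
      sum_prod_range_succ_eq_one_add_mul (fun m ↦ q (ω + 1 + m)) N
    _ = 1 + q (ω + 1) * Ufam N q (ω + 1) := by rw [Nat.cast_zero, add_zero]

/-- The family `U_ω` solves the cyclic linear system
`(1 + q_ω)·U_ω − U_{ω−1} − q_{ω+1}·U_{ω+1} = 0`, and moreover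
`U_ω − q_{ω+1}·U_{ω+1} = 1 − q` with `q = ∏_ω q_ω`. -/
theorem Ufam_solves_system {R : Type*} [CommRing R] (N : ℕ) [NeZero N]
    (q : ZMod N → R) (ω : ZMod N) :
    (1 + q ω) * Ufam N q ω - Ufam N q (ω - 1) - q (ω + 1) * Ufam N q (ω + 1) = 0 ∧
    Ufam N q ω - q (ω + 1) * Ufam N q (ω + 1) = 1 - ∏ σ : ZMod N, q σ := by
  have step := Ufam_add_prod N q ω
  have step_pred := Ufam_add_prod N q (ω - 1)
  rw [sub_add_cancel] at step_pred
  constructor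
  · linear_combination step - step_pred
  · linear_combination step
end
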